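/- arXiv:1710.02551 — 2 statements merged into one kernel-verified Lean document; each statement's English description precedes it below -/
import Mathlib

section
/- Let A and M be real n×n matrices, let V̄, d ∈ ℝ^n, and define sequences (Q_t)_{t≥0}, (V_t)_{t≥0} in ℝ^n by the linearized closed-loop droop dynamics: V_0 = V̄ + d, Q_1 − Q_0 = −M·d, and for all t ≥ 1, V_t − V_{t−1} = A·(Q_t − Q_{t−1}) and Q_{t+1} − Q_t = −M·(V_t − V_{t−1}). Then for every t ≥ 0, V_t = V̄ + (Σ_{i=0}^{t} (−A·M)^i)·d. -/
/-!
Eliminating `Q` from the two update laws shows that each voltage increment is `-(A * M)` times the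
preceding one. If `Vbar` is inserted as the voltage just before time `0`, then `d` is itself the
first increment, so the increments are `(-(A * M)) ^ i *ᵥ d` and they telescope to a geometric sum.
-/

section DroopControl

open scoped Matrix

variable {ι κ R : Type*} [Fintype ι]

theorem mulVec_neg_mulVec [Fintype κ] [NonUnitalRing R]
    (A : Matrix ι κ R) (M : Matrix κ ι R) (v : ι → R) :
    A *ᵥ -(M *ᵥ v) = -(A * M) *ᵥ v := by
  rw [Matrix.mulVec_neg, Matrix.mulVec_mulVec, Matrix.neg_mulVec]

theorem eq_pow_mulVec_of_succ_eq_mulVec [DecidableEq ι] [Semiring R]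
    {B : Matrix ι ι R} {x : ℕ → ι → R} (hx : ∀ t, x (t + 1) = B *ᵥ x t) (t : ℕ) :
    x t = (B ^ t) *ᵥ x 0 := by
  induction t with
  | zero => rw [pow_zero, Matrix.one_mulVec]
  | succ t ih => rw [hx, ih, Matrix.mulVec_mulVec, pow_succ']

theorem eq_add_geom_sum_mulVec_of_sub_eq_mulVec_sub [DecidableEq ι] [Ring R]
    {B : Matrix ι ι R} {x : ℕ → ι → R}
    (hx : ∀ t, x (t + 2) - x (t + 1) = B *ᵥ (x (t + 1) - x t)) (t : ℕ) :
    x t = x 0 + (∑ i ∈ Finset.range t, B ^ i) *ᵥ (x 1 - x 0) := by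
  have increment_eq (i : ℕ) : x (i + 1) - x i = (B ^ i) *ᵥ (x 1 - x 0) :=
    eq_pow_mulVec_of_succ_eq_mulVec (x := fun i ↦ x (i + 1) - x i) hx i
  calc
    x t = x 0 + ∑ i ∈ Finset.range t, (x (i + 1) - x i) := Finset.eq_sum_range_sub x t
    _ = x 0 + (∑ i ∈ Finset.range t, B ^ i) *ᵥ (x 1 - x 0) := by
      rw [Matrix.sum_mulVec, Finset.sum_congr rfl fun i _ ↦ increment_eq i]

theorem droop_disturbance_voltage_formula_general [DecidableEq ι] [Fintype κ] [Ring R]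
    (A : Matrix ι κ R) (M : Matrix κ ι R) (Vbar d : ι → R)
    (Q : ℕ → κ → R) (V : ℕ → ι → R)
    (hV0 : V 0 = Vbar + d)
    (hQ1 : Q 1 - Q 0 = -(M *ᵥ d))
    (hV : ∀ t, V (t + 1) - V t = A *ᵥ (Q (t + 1) - Q t))
    (hQ : ∀ t, Q (t + 2) - Q (t + 1) = -(M *ᵥ (V (t + 1) - V t))) (t : ℕ) :
    V t = Vbar + (∑ i ∈ Finset.range (t + 1), (-(A * M)) ^ i) *ᵥ d := by
  let W : ℕ → ι → R
    | 0 => Vbar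
    | t + 1 => V t
  have first_increment : W 1 - W 0 = d := sub_eq_of_eq_add' hV0
  have increment_succ (t : ℕ) : W (t + 2) - W (t + 1) = -(A * M) *ᵥ (W (t + 1) - W t) := by
    rw [← mulVec_neg_mulVec]
    cases t with
    | zero => rw [first_increment, ← hQ1]; exact hV 0
    | succ t => exact (hV (t + 1)).trans (congrArg (A *ᵥ ·) (hQ t))
  rw [← first_increment]
  exact eq_add_geom_sum_mulVec_of_sub_eq_mulVec_sub increment_succ (t + 1)

end DroopControl

/-- Linearized closed-loop droop dynamics after a voltage disturbance `d`:
`V 0 = V̄ + d`, `Q 1 - Q 0 = -M·d`, and for `t ≥ 1`,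
`V t - V (t-1) = A·(Q t - Q (t-1))` and `Q (t+1) - Q t = -M·(V t - V (t-1))`.
Then `V t = V̄ + (∑_{i=0}^{t} (-A·M)^i)·d` for every `t ≥ 0`. -/
theorem droop_disturbance_voltage_formula {n : ℕ}
    (A M : Matrix (Fin n) (Fin n) ℝ) (Vbar d : Fin n → ℝ)
    (Q V : ℕ → Fin n → ℝ)
    (hV0 : V 0 = Vbar + d)
    (hQ1 : Q 1 - Q 0 = -(M.mulVec d))
    (hV : ∀ t : ℕ, V (t + 1) - V t = A.mulVec (Q (t + 1) - Q t))
    (hQ : ∀ t : ℕ, Q (t + 2) - Q (t + 1) = -(M.mulVec (V (t + 1) - V t))) :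
    ∀ t : ℕ, V t = Vbar + (∑ i ∈ Finset.range (t + 1), (-(A * M)) ^ i).mulVec d :=
  droop_disturbance_voltage_formula_general A M Vbar d Q V hV0 hQ1 hV hQ
end

section
/- Let A, M, K be real n×n matrices with I + A·M invertible, and let S_t, S_{t+1}, Q̄_t, Q̄_{t+1}, q ∈ ℝ^n satisfy: (i) Q̄_t = q − M·S_t, (ii) Q̄_{t+1} = (q − K·S_t) − M·S_{t+1}, and (iii) S_{t+1} − S_t = A·(Q̄_{t+1} − Q̄_t). Then S_{t+1} = B·S_t where B = I − (I + A·M)^{-1}·A·K. -/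
section

open scoped Matrix

variable {m n R : Type*} [Fintype n]

theorem droop_control_sub [NonUnitalNonAssocRing R] {M : Matrix m n R} {S S' : n → R}
    {Q Q' q q' : m → R} (hQ : Q = q - M *ᵥ S) (hQ' : Q' = q' - M *ᵥ S') :
    Q' - Q = (q' - q) - M *ᵥ (S' - S) := by
  rw [hQ, hQ', Matrix.mulVec_sub, sub_sub_sub_comm]

variable [Fintype m] [DecidableEq n]

theorem one_add_mul_mulVec_eq_of_eq_mulVec_sub [Ring R] {A : Matrix n m R} {M : Matrix m n R}
    {v : n → R} {u : m → R} (h : v = A *ᵥ (u - M *ᵥ v)) : (1 + A * M) *ᵥ v = A *ᵥ u := by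
  rwa [Matrix.add_mulVec, Matrix.one_mulVec, ← Matrix.mulVec_mulVec, ← eq_sub_iff_add_eq,
    ← Matrix.mulVec_sub]

variable [CommRing R]

theorem eq_inv_one_add_mul_mulVec_of_eq_mulVec_sub {A : Matrix n m R} {M : Matrix m n R}
    (hUnit : IsUnit (1 + A * M)) {v : n → R} {u : m → R} (h : v = A *ᵥ (u - M *ᵥ v)) :
    v = (1 + A * M)⁻¹ *ᵥ (A *ᵥ u) :=
  letI := hUnit.invertible
  (Matrix.inv_mulVec_eq_vec (one_add_mul_mulVec_eq_of_eq_mulVec_sub h).symm).symm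

theorem outer_loop_error_dynamics_general (A : Matrix n m R) (M K : Matrix m n R)
    (hUnit : IsUnit (1 + A * M)) (St St1 : n → R) (Qt Qt1 q : m → R)
    (hQt : Qt = q - M *ᵥ St) (hQt1 : Qt1 = (q - K *ᵥ St) - M *ᵥ St1)
    (hS : St1 - St = A *ᵥ (Qt1 - Qt)) :
    St1 = (1 - (1 + A * M)⁻¹ * A * K) *ᵥ St := by
  have feedback : St1 - St = A *ᵥ (-(K *ᵥ St) - M *ᵥ (St1 - St)) := by
    rwa [droop_control_sub hQt hQt1, sub_sub_cancel_left] at hS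
  calc
    St1 = St + (St1 - St) := (add_sub_cancel St St1).symm
    _ = St + (1 + A * M)⁻¹ *ᵥ (A *ᵥ -(K *ᵥ St)) :=
      congrArg (St + ·) (eq_inv_one_add_mul_mulVec_of_eq_mulVec_sub hUnit feedback)
    _ = St - ((1 + A * M)⁻¹ * A * K) *ᵥ St := by
      simp only [Matrix.mulVec_neg, Matrix.mulVec_mulVec, Matrix.mul_assoc, sub_eq_add_neg]
    _ = (1 - (1 + A * M)⁻¹ * A * K) *ᵥ St := by
      rw [Matrix.sub_mulVec, Matrix.one_mulVec]

end

/-- Outer-loop error dynamics of the two-layer adaptive volt/var control: if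
`Q̄_t = q - M·S_t`, `Q̄_{t+1} = (q - K·S_t) - M·S_{t+1}` and
`S_{t+1} - S_t = A·(Q̄_{t+1} - Q̄_t)`, then `S_{t+1} = B·S_t` with
`B = I - (I + A·M)⁻¹·A·K`. -/
theorem outer_loop_error_dynamics {n : ℕ}
    (A M K : Matrix (Fin n) (Fin n) ℝ)
    (hUnit : IsUnit (1 + A * M))
    (St St1 Qt Qt1 q : Fin n → ℝ)
    (h1 : Qt = q - M.mulVec St)
    (h2 : Qt1 = (q - K.mulVec St) - M.mulVec St1)
    (h3 : St1 - St = A.mulVec (Qt1 - Qt)) :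
    St1 = (1 - (1 + A * M)⁻¹ * A * K).mulVec St :=
  outer_loop_error_dynamics_general A M K hUnit St St1 Qt Qt1 q h1 h2 h3
end
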